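/- Let Γ be a set of cardinality ℵ₁. Then Ba(C_p(2^Γ)) = Bo(C(2^Γ)), i.e. the σ-algebra on C(2^Γ) generated by the evaluation maps coincides with the Borel σ-algebra of the supremum-norm topology. -/

import Mathlib

/-- The Baire σ-algebra of the pointwise convergence topology on `C(K, ℝ)`:
the σ-algebra generated by the evaluation maps `f ↦ f t`, `t ∈ K`. -/
def BaCp (K : Type*) [TopologicalSpace K] : MeasurableSpace C(K, ℝ) :=
  ⨆ t : K, MeasurableSpace.comap (fun f : C(K, ℝ) => f t) Real.measurableSpace

/-!
Say that `Γ` is Kunen if every subset of `Γ × Γ` lies in the product of the power set σ-algebras.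
Sets of cardinality at most `ℵ₁` are Kunen: split a subset of the square along a well order with
countable initial segments into two parts with countable sections.

Given `ε > 0`, a continuous function `f` on `Γ → X`, with `X` finite and discrete, has a finite
set of heavy coordinates, those which alone can move `f` by more than `ε`. Whether this set meets
a given `A ⊆ Γ` is an event in `Ba(C_p)`. The Kunen property makes the union of two measurable
finite-set-valued maps measurable for the power set σ-algebra on finite sets, and hence the
whole set of heavy coordinates is a measurable function of `f` in this strong sense.

Now fix a countable dense set `D` and replace `f x` by the value of `f` at a point of `D` agreeing
with `x` on the heavy coordinates. The result depends on `f` only through its values on `D` and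
its set of heavy coordinates, so it is a `Ba(C_p)`-to-Borel measurable function of `f`, and it
converges uniformly to `f` as `ε → 0`. The identity of `C(Γ → X, ℝ)` is therefore
`Ba(C_p)`-to-Borel measurable.
-/

open Set Filter Topology TopologicalSpace MeasureTheory

section Kunen

variable {Ω X Y Z : Type*}

/-- The Kunen property of (the cardinality of) `X`: every subset of the square belongs to the
product of the two power set σ-algebras. -/
def IsKunen (X : Type*) : Prop :=
  ∀ B : Set (X × X), MeasurableSet[MeasurableSpace.prod ⊤ ⊤] B

theorem measurableEq_of_measurable_of_injective [MeasurableSpace X] [MeasurableSpace Y]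
    [MeasurableEq Y] {e : X → Y} (he : Measurable e) (hinj : Function.Injective e) :
    MeasurableEq X where
  measurableSet_diagonal := by
    convert measurableSet_eq_fun (he.comp measurable_fst) (he.comp measurable_snd) using 1
    ext p
    exact hinj.eq_iff.symm

-- Such a set is a countable union of graphs, each cut down to a measurable set of abscissae.
theorem measurableSet_of_countable_sections [MeasurableSpace X] [DiscreteMeasurableSpace X]
    [MeasurableSpace Y] [MeasurableEq Y] {B : Set (X × Y)}
    (hB : ∀ x, {y | (x, y) ∈ B}.Countable) : MeasurableSet B := by
  rcases isEmpty_or_nonempty Y with _ | _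
  · exact Subsingleton.measurableSet
  choose g hg using fun x => countable_iff_exists_subset_range.1 (hB x)
  have B_eq : B = ⋃ n, {p | g p.1 n = p.2} ∩ Prod.fst ⁻¹' {x | (x, g x n) ∈ B} := by
    ext ⟨x, y⟩
    simp only [mem_iUnion, mem_inter_iff, mem_ofPred_eq, mem_preimage]
    constructor
    · intro hxy
      obtain ⟨n, rfl⟩ := hg x hxy
      exact ⟨n, rfl, hxy⟩
    · rintro ⟨n, rfl, hxy⟩
      exact hxy
  rw [B_eq]
  refine MeasurableSet.iUnion fun n => MeasurableSet.inter ?_ (measurable_fst (.of_discrete))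
  exact measurableSet_eq_fun ((Measurable.of_discrete (f := (g · n))).comp measurable_fst)
    measurable_snd

theorem exists_linearOrder_countable_Iic (h : Cardinal.mk X ≤ Cardinal.aleph 1) :
    ∃ _ : LinearOrder X, ∀ x : X, (Iic x).Countable := by
  obtain ⟨_, _, hord⟩ := Cardinal.exists_ord_eq_type_lt X
  refine ⟨inferInstance, fun x => ?_⟩
  have Iio_countable : (Iio x).Countable :=
    Cardinal.le_aleph0_iff_set_countable.1 <|
      Cardinal.lt_aleph_one_iff.1 <| (Cardinal.card_typein_lt x hord).trans_le h
  exact Iio_insert (a := x) ▸ Iio_countable.insert x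

theorem exists_injective_real_of_mk_le_continuum (h : Cardinal.mk X ≤ Cardinal.continuum) :
    ∃ e : X → ℝ, Function.Injective e := by
  have lift_le : Cardinal.lift.{0} (Cardinal.mk X) ≤ Cardinal.lift (Cardinal.mk ℝ) := by
    rwa [Cardinal.mk_real, Cardinal.lift_continuum, Cardinal.lift_id']
  obtain ⟨e⟩ := Cardinal.lift_mk_le'.1 lift_le
  exact ⟨e, e.injective⟩

theorem isKunen_of_mk_le_aleph_one (h : Cardinal.mk X ≤ Cardinal.aleph 1) : IsKunen X := by
  intro B
  let : MeasurableSpace X := ⊤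
  obtain ⟨_, Iic_countable⟩ := exists_linearOrder_countable_Iic h
  obtain ⟨e, he⟩ :=
    exists_injective_real_of_mk_le_continuum (h.trans Cardinal.aleph_one_le_continuum)
  have : MeasurableEq X := measurableEq_of_measurable_of_injective measurable_from_top he
  have below_diagonal : MeasurableSet {p ∈ B | p.2 ≤ p.1} :=
    measurableSet_of_countable_sections fun x => (Iic_countable x).mono fun _ hy => hy.2
  have above_diagonal : MeasurableSet {p : X × X | p.swap ∈ B ∧ p.2 ≤ p.1} :=
    measurableSet_of_countable_sections fun x => (Iic_countable x).mono fun _ hy => hy.2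
  have B_eq : B = {p ∈ B | p.2 ≤ p.1} ∪ Prod.swap ⁻¹' {p | p.swap ∈ B ∧ p.2 ≤ p.1} := by
    ext p
    have := le_total p.2 p.1
    simp only [mem_union, mem_ofPred_eq, mem_preimage, Prod.swap_swap, Prod.fst_swap,
      Prod.snd_swap]
    tauto
  rw [B_eq]
  exact below_diagonal.union (measurable_swap above_diagonal)

theorem IsKunen.of_injective (hY : IsKunen Y) {f : X → Y} (hf : Function.Injective f) :
    IsKunen X := by
  intro B
  let : MeasurableSpace X := ⊤
  let : MeasurableSpace Y := ⊤
  have image_measurable : MeasurableSet (Prod.map f f '' B) := hY _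
  rw [← (hf.prodMap hf).preimage_image B]
  exact (measurable_from_top.prodMap measurable_from_top) image_measurable

theorem IsKunen.finset (hX : IsKunen X) : IsKunen (Finset X) := by
  rcases finite_or_infinite X with _ | _
  · let : MeasurableSpace (Finset X) := ⊤
    exact fun B => B.to_countable.measurableSet
  · obtain ⟨f⟩ : Nonempty (Finset X ↪ X) := (Cardinal.mk_finset_of_infinite X).le
    exact hX.of_injective f.injective

theorem IsKunen.measurable_map₂ [MeasurableSpace Ω] [MeasurableSpace Z] (hX : IsKunen X)
    (g : X → X → Z) {u v : Ω → X} (hu : Measurable[_, ⊤] u) (hv : Measurable[_, ⊤] v) :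
    Measurable fun ω => g (u ω) (v ω) := by
  let : MeasurableSpace X := ⊤
  exact fun s _ => hu.prodMk hv (hX {p | g p.1 p.2 ∈ s})

theorem exists_countable_sections_determined [MeasurableSpace X] [MeasurableSpace Y]
    {B : Set (X × Y)} (hB : MeasurableSet B) :
    ∃ S : Set (Set Y), S.Countable ∧ (∀ s ∈ S, MeasurableSet s) ∧
      ∀ x y y', (∀ s ∈ S, y ∈ s ↔ y' ∈ s) → ((x, y) ∈ B ↔ (x, y') ∈ B) := by
  rw [← generateFrom_prod] at hB
  induction B, hB using MeasurableSpace.generateFrom_induction with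
  | hC _ hst _ =>
    obtain ⟨s, -, t, ht, rfl⟩ := hst
    refine ⟨{t}, countable_singleton t, fun _ h => h ▸ ht, fun x y y' h => ?_⟩
    exact and_congr_right fun _ => h t rfl
  | empty => exact ⟨∅, countable_empty, by simp, by simp⟩
  | compl B _ ih =>
    obtain ⟨S, hS, hSm, hSB⟩ := ih
    exact ⟨S, hS, hSm, fun x y y' h => not_congr (hSB x y y' h)⟩
  | iUnion B _ ih =>
    choose S hS hSm hSB using ih
    refine ⟨⋃ n, S n, countable_iUnion hS, fun s hs => ?_, fun x y y' h => ?_⟩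
    · obtain ⟨n, hn⟩ := mem_iUnion.1 hs
      exact hSm n s hn
    · simp only [mem_iUnion]
      exact exists_congr fun n => hSB n x y y' fun s hs => h s (mem_iUnion_of_mem n hs)

theorem countablySeparated_of_measurableEq [MeasurableSpace X] [MeasurableEq X] :
    MeasurableSpace.CountablySeparated X := by
  obtain ⟨S, hS, hSm, hSdiag⟩ :=
    exists_countable_sections_determined (measurableSet_diagonal (α := X))
  exact ⟨S, hS, hSm, fun x _ y _ h => (hSdiag x x y h).1 rfl⟩

theorem IsKunen.exists_injective_nat_bool (hX : IsKunen X) :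
    ∃ e : X → ℕ → Bool, Function.Injective e := by
  let : MeasurableSpace X := ⊤
  have : MeasurableEq X := ⟨hX _⟩
  have := countablySeparated_of_measurableEq (X := X)
  obtain ⟨e, -, he⟩ := MeasurableSpace.measurable_injection_nat_bool_of_countablySeparated X
  exact ⟨e, he⟩

end Kunen

section InitialBits

variable {Γ : Type*} {e : Γ → ℕ → Bool}

/-- The first `n` bits of the code `e γ`. Their fibres partition `Γ` into finitely many cells,
finer and finer as `n` grows. -/
def initialBits (e : Γ → ℕ → Bool) (n : ℕ) (γ : Γ) : Fin n → Bool := fun i => e γ i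

theorem eventually_injOn_initialBits (he : Function.Injective e) {s : Set Γ} (hs : s.Finite) :
    ∀ᶠ n in atTop, InjOn (initialBits e n) s := by
  simp only [InjOn]
  refine hs.eventually_all.2 fun a _ => hs.eventually_all.2 fun b _ => ?_
  rcases eq_or_ne a b with rfl | hab
  · exact Eventually.of_forall fun _ _ => rfl
  · obtain ⟨i, hi⟩ := Function.ne_iff.1 (he.ne hab)
    filter_upwards [eventually_gt_atTop i] with n hn heq
    exact absurd (congrFun heq ⟨i, hn⟩) hi

-- The dense set consists of the functions of finitely many bits with values in a countable dense
-- set (Hewitt–Marczewski–Pondiczery).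
theorem separableSpace_pi_of_injective_nat_bool {X : Type*} [TopologicalSpace X]
    [SeparableSpace X] (he : Function.Injective e) : SeparableSpace (Γ → X) := by
  rcases isEmpty_or_nonempty X with _ | _
  · infer_instance
  refine .of_denseRange (fun (p : Σ n, (Fin n → Bool) → ℕ) γ =>
    denseSeq X (p.2 (initialBits e p.1 γ))) fun x => mem_closure_iff_nhds.2 fun t ht => ?_
  obtain ⟨I, hI, u, hu, hut⟩ := Filter.mem_pi.1 (nhds_pi (a := x) ▸ ht)
  obtain ⟨n, hn⟩ := (eventually_injOn_initialBits he hI).exists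
  choose k hk using fun γ => (denseRange_denseSeq X).exists_mem_open isOpen_interior
    ⟨x γ, mem_interior_iff_mem_nhds.2 (hu γ)⟩
  refine ⟨_, hut fun γ hγ => interior_subset ?_,
    ⟨n, Function.extend (I.domRestrict (initialBits e n)) (fun γ => k γ) 0⟩, rfl⟩
  dsimp only
  rw [show initialBits e n γ = I.domRestrict (initialBits e n) ⟨γ, hγ⟩ from rfl,
    hn.injective.extend_apply]
  exact hk γ

end InitialBits

section FinsetValued

variable {Ω Γ Z : Type*} [MeasurableSpace Ω] {E : Ω → Finset Γ} {e : Γ → ℕ → Bool}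

/-- A finite-set-valued map is hit-measurable when the event that its value meets `A` is measurable
for every `A`. -/
def HitMeasurable (E : Ω → Finset Γ) : Prop :=
  ∀ A : Set Γ, MeasurableSet {ω | ∃ γ ∈ E ω, γ ∈ A}

open scoped Classical in
theorem HitMeasurable.filter_mem (hE : HitMeasurable E) (U : Set Γ) :
    HitMeasurable fun ω => (E ω).filter (· ∈ U) := by
  intro A
  convert hE (U ∩ A) using 3 with ω
  simp [and_assoc]

theorem HitMeasurable.measurableSet_card_le_one (hE : HitMeasurable E)
    (he : Function.Injective e) : MeasurableSet {ω | (E ω).card ≤ 1} := by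
  have not_separated : {ω | (E ω).card ≤ 1} = ⋂ n,
      ({ω | ∃ γ ∈ E ω, e γ n = true} ∩ {ω | ∃ γ ∈ E ω, e γ n = false})ᶜ := by
    ext ω
    simp only [Finset.card_le_one, mem_ofPred_eq, mem_iInter, mem_compl_iff, mem_inter_iff]
    constructor
    · rintro h n ⟨⟨a, ha, han⟩, b, hb, hbn⟩
      simp [h a ha b hb, hbn] at han
    · intro h a ha b hb
      refine he (funext fun n => ?_)
      cases han : e a n <;> cases hbn : e b n
      · rfl
      · exact absurd ⟨⟨b, hb, hbn⟩, a, ha, han⟩ (h n)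
      · exact absurd ⟨⟨a, ha, han⟩, b, hb, hbn⟩ (h n)
      · rfl
  rw [not_separated]
  exact .iInter fun n => ((hE {γ | e γ n = true}).inter (hE {γ | e γ n = false})).compl

theorem HitMeasurable.measurable_of_card_le_one (hE : HitMeasurable E)
    (hcard : ∀ ω, (E ω).card ≤ 1) : Measurable[_, ⊤] E := by
  intro B _
  have preimage_eq : E ⁻¹' B = {ω | ∃ γ ∈ E ω, γ ∈ {γ | {γ} ∈ B}} ∪
      ({ω | ∃ γ ∈ E ω, γ ∈ univ}ᶜ ∩ {_ω | ∅ ∈ B}) := by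
    ext ω
    rcases Nat.le_one_iff_eq_zero_or_eq_one.1 (hcard ω) with h | h
    · simp [Finset.card_eq_zero.1 h]
    · obtain ⟨γ, hγ⟩ := Finset.card_eq_one.1 h
      simp [hγ]
  rw [preimage_eq]
  exact (hE _).union ((hE _).compl.inter (.const _))

open scoped Classical in
/-- The part of `F` inside the cell `U` if it has at most one element, and `∅` otherwise.
Over the cells of a fine enough partition, these parts make up `F`. -/
noncomputable def singletonPart (U : Set Γ) (F : Finset Γ) : Finset Γ :=
  if (F.filter (· ∈ U)).card ≤ 1 then F.filter (· ∈ U) else ∅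

theorem HitMeasurable.measurable_singletonPart (hE : HitMeasurable E)
    (he : Function.Injective e) (U : Set Γ) :
    Measurable[_, ⊤] fun ω => singletonPart U (E ω) := by
  classical
  refine HitMeasurable.measurable_of_card_le_one (fun A => ?_) fun ω => ?_
  · convert ((hE.filter_mem U).measurableSet_card_le_one he).inter (hE.filter_mem U A) using 1
    ext ω
    simp only [singletonPart, mem_inter_iff, mem_ofPred_eq]
    split_ifs with h <;> simp [h]
  · unfold singletonPart
    split_ifs with h
    exacts [h, by simp]

open scoped Classical in
theorem eventually_biUnion_singletonPart_eq (he : Function.Injective e) (F : Finset Γ) :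
    ∀ᶠ n in atTop,
      Finset.univ.biUnion (fun c => singletonPart {γ | initialBits e n γ = c} F) = F := by
  filter_upwards [eventually_injOn_initialBits he F.finite_toSet] with n hn
  have mem_cell (c γ) :
      γ ∈ singletonPart {γ | initialBits e n γ = c} F ↔ γ ∈ F ∧ initialBits e n γ = c := by
    rw [singletonPart, if_pos]
    · simp
    · refine Finset.card_le_one.2 fun a ha b hb => ?_
      simp only [Finset.mem_filter, mem_ofPred_eq] at ha hb
      exact hn ha.1 hb.1 (ha.2.trans hb.2.symm)
  ext γ
  simp [mem_cell]

open scoped Classical in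
theorem IsKunen.measurable_finset_biUnion (hΓ : IsKunen Γ) {ι : Type*} (s : Finset ι)
    {F : ι → Ω → Finset Γ} (hF : ∀ i, Measurable[_, ⊤] (F i)) :
    Measurable[_, ⊤] fun ω => s.biUnion (F · ω) := by
  let : MeasurableSpace (Finset Γ) := ⊤
  induction s using Finset.induction_on with
  | empty => simp only [Finset.biUnion_empty, measurable_const]
  | insert i s _ ih =>
    simp only [Finset.biUnion_insert]
    exact hΓ.finset.measurable_map₂ (· ∪ ·) (hF i) ih

theorem measurable_top_of_eventually_eq {F : ℕ → Ω → Z} {G : Ω → Z}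
    (hF : ∀ n, Measurable[_, ⊤] (F n)) (hFG : ∀ ω, ∀ᶠ n in atTop, F n ω = G ω) :
    Measurable[_, ⊤] G := by
  let : MeasurableSpace Z := ⊤
  let : TopologicalSpace Z := ⊥
  have : DiscreteTopology Z := ⟨rfl⟩
  have : BorelSpace Z := ⟨borel_eq_top_of_discrete.symm⟩
  exact measurable_of_tendsto_metrizable hF <| tendsto_pi_nhds.2 fun ω =>
    tendsto_nhds_of_eventually_eq (hFG ω)

theorem HitMeasurable.measurable_of_isKunen (hE : HitMeasurable E) (hΓ : IsKunen Γ) :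
    Measurable[_, ⊤] E := by
  classical
  obtain ⟨e, he⟩ := hΓ.exists_injective_nat_bool
  exact measurable_top_of_eventually_eq
    (fun n => hΓ.measurable_finset_biUnion Finset.univ fun c =>
      hE.measurable_singletonPart he {γ | initialBits e n γ = c})
    fun ω => eventually_biUnion_singletonPart_eq he (E ω)

end FinsetValued

section VariesOn

variable {Γ X M : Type*} [PseudoMetricSpace M]

/-- `f` moves by more than `η` under some change of coordinates indexed by `B`. For continuous `f`
this can be tested on a countable dense set of pairs of points. -/
def VariesOn (f : (Γ → X) → M) (B : Set Γ) (η : ℝ) : Prop :=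
  ∃ x y, EqOn x y Bᶜ ∧ η < dist (f x) (f y)

theorem VariesOn.mono {f : (Γ → X) → M} {B C : Set Γ} {η θ : ℝ} (h : VariesOn f B η)
    (hBC : B ⊆ C) (hθη : θ ≤ η) : VariesOn f C θ := by
  obtain ⟨x, y, hxy, hη⟩ := h
  exact ⟨x, y, hxy.mono (compl_subset_compl.2 hBC), hθη.trans_lt hη⟩

theorem dist_le_card_mul_of_forall_not_variesOn {f : (Γ → X) → M} {ε : ℝ} {H : Finset Γ}
    (hH : ∀ γ ∈ H, ¬ VariesOn f {γ} ε) {x y : Γ → X} (hxy : EqOn x y (H : Set Γ)ᶜ) :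
    dist (f x) (f y) ≤ H.card * ε := by
  classical
  induction H using Finset.induction_on generalizing x with
  | empty =>
    have : x = y := funext fun γ => hxy (by simp)
    simp [this]
  | insert a H ha ih =>
    let x' := Function.update x a (y a)
    have first_step : dist (f x) (f x') ≤ ε := by
      by_contra! hlt
      refine hH a (H.mem_insert_self a) ⟨x, x', fun γ hγ => ?_, hlt⟩
      exact (Function.update_of_ne hγ _ _).symm
    have other_steps : dist (f x') (f y) ≤ H.card * ε := by
      refine ih (fun γ hγ => hH γ (Finset.mem_insert_of_mem hγ)) fun γ hγ => ?_
      rcases eq_or_ne γ a with rfl | hne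
      · exact Function.update_self _ _ _
      · exact (Function.update_of_ne hne _ _).trans (hxy (by simp_all))
    calc dist (f x) (f y) ≤ dist (f x) (f x') + dist (f x') (f y) := dist_triangle _ _ _
      _ ≤ ε + H.card * ε := add_le_add first_step other_steps
      _ = (insert a H).card * ε := by
        rw [Finset.card_insert_of_notMem ha]
        push_cast
        ring

theorem VariesOn.exists_variesOn_singleton {f : (Γ → X) → M} {C G : Set Γ} {ε δ : ℝ}
    (h : VariesOn f C (ε + δ)) (hε : 0 ≤ ε) (hG : ∀ x y, EqOn x y G → dist (f x) (f y) < δ)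
    (hCG : (C ∩ G).Subsingleton) : ∃ γ ∈ C, VariesOn f {γ} ε := by
  classical
  obtain ⟨x, y, hxy, hlt⟩ := h
  rcases (C ∩ G).eq_empty_or_nonempty with hempty | ⟨γ, hγC, hγG⟩
  · have : EqOn x y G := fun γ hγ => hxy fun hγC => hempty.subset ⟨hγC, hγ⟩
    linarith [hG x y this]
  · let x' := Function.update x γ (y γ)
    have x'_eqOn : EqOn x' y G := by
      intro γ' hγ'
      rcases eq_or_ne γ' γ with rfl | hne
      · exact Function.update_self _ _ _
      · exact (Function.update_of_ne hne _ _).trans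
          (hxy fun hC => hne (hCG ⟨hC, hγ'⟩ ⟨hγC, hγG⟩))
    refine ⟨γ, hγC, x, x', fun γ' hγ' => (Function.update_of_ne hγ' _ _).symm, ?_⟩
    linarith [hG x' y x'_eqOn, dist_triangle (f x) (f x') (f y)]

variable [TopologicalSpace X] [CompactSpace X]

theorem exists_finset_forall_eqOn_dist_lt {f : (Γ → X) → M} (hf : Continuous f)
    {δ : ℝ} (hδ : 0 < δ) : ∃ G : Finset Γ, ∀ x y, EqOn x y G → dist (f x) (f y) < δ := by
  classical
  have box (x : Γ → X) : ∃ I : Finset Γ, ∃ U ∈ 𝓝 x,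
      ∀ y ∈ U, ∀ z, EqOn y z I → dist (f z) (f x) < δ / 2 := by
    have ball_mem : {y | dist (f y) (f x) < δ / 2} ∈ 𝓝 x :=
      hf.continuousAt (Metric.ball_mem_nhds _ (half_pos hδ))
    obtain ⟨I, hI, u, hu, hsub⟩ := Filter.mem_pi.1 (nhds_pi (a := x) ▸ ball_mem)
    refine ⟨hI.toFinset, I.pi u, set_pi_mem_nhds hI fun i _ => hu i, fun y hy z hyz => ?_⟩
    exact hsub fun i hi => hyz (hI.mem_toFinset.2 hi) ▸ hy i hi
  choose I U hU hIU using box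
  obtain ⟨t, ht⟩ := CompactSpace.elim_nhds_subcover U hU
  refine ⟨t.biUnion I, fun x y hxy => ?_⟩
  obtain ⟨c, hc, hxc⟩ := mem_iUnion₂.1 (ht.symm ▸ mem_univ x : x ∈ ⋃ c ∈ t, U c)
  have hyc : EqOn x y (I c) := hxy.mono (Finset.subset_biUnion_of_mem I hc)
  calc dist (f x) (f y) ≤ dist (f x) (f c) + dist (f y) (f c) := dist_triangle_right _ _ _
    _ < δ / 2 + δ / 2 := add_lt_add (hIU c x hxc x fun _ _ => rfl) (hIU c x hxc y hyc)
    _ = δ := add_halves δ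

-- A finite set `G` determines `f` up to `1 / (n + 1)`; once the bits separate `G`, a cell on which
-- `f` varies contains only one point of `G`, and that point carries the variation.
theorem exists_variesOn_singleton_iff {f : (Γ → X) → M} (hf : Continuous f)
    {e : Γ → ℕ → Bool} (he : Function.Injective e) (A : Set Γ) {ε : ℝ} (hε : 0 ≤ ε) :
    (∃ γ ∈ A, VariesOn f {γ} ε) ↔ ∃ n : ℕ, ∀ j, ∃ c : Fin j → Bool,
      VariesOn f (A ∩ {γ | initialBits e j γ = c}) (ε + 1 / (n + 1)) := by
  constructor
  · rintro ⟨γ, hγ, x, y, hxy, hlt⟩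
    obtain ⟨n, hn⟩ := exists_nat_one_div_lt (sub_pos.2 hlt)
    have hvar : VariesOn f {γ} (ε + 1 / (n + 1)) := ⟨x, y, hxy, by linarith⟩
    exact ⟨n, fun j => ⟨initialBits e j γ,
      hvar.mono (singleton_subset_iff.2 ⟨hγ, rfl⟩) le_rfl⟩⟩
  · rintro ⟨n, h⟩
    obtain ⟨G, hG⟩ := exists_finset_forall_eqOn_dist_lt hf (Nat.one_div_pos_of_nat (n := n))
    obtain ⟨j, hj⟩ := (eventually_injOn_initialBits he G.finite_toSet).exists
    obtain ⟨c, hc⟩ := h j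
    obtain ⟨γ, hγ, hvar⟩ := hc.exists_variesOn_singleton hε hG
      fun a ha b hb => hj ha.2 hb.2 (ha.1.2.trans hb.1.2.symm)
    exact ⟨γ, hγ.1, hvar⟩

theorem finite_setOf_variesOn_singleton {f : (Γ → X) → M} (hf : Continuous f)
    {ε : ℝ} (hε : 0 < ε) : {γ | VariesOn f {γ} ε}.Finite := by
  obtain ⟨G, hG⟩ := exists_finset_forall_eqOn_dist_lt hf hε
  refine G.finite_toSet.subset ?_
  rintro γ ⟨x, y, hxy, hlt⟩
  by_contra hγ
  exact (hG x y fun γ' hγ' => hxy fun h => hγ (h ▸ hγ')).not_gt hlt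

/-- The finitely many coordinates which alone can move the continuous function `f` by more than
`ε`. -/
noncomputable def heavyCoords {ε : ℝ} (hε : 0 < ε) (f : C(Γ → X, M)) : Finset Γ :=
  (finite_setOf_variesOn_singleton f.continuous hε).toFinset

theorem mem_heavyCoords {ε : ℝ} {hε : 0 < ε} {f : C(Γ → X, M)} {γ : Γ} :
    γ ∈ heavyCoords hε f ↔ VariesOn f {γ} ε := by
  simp [heavyCoords]

theorem dist_le_of_eqOn_heavyCoords {f : C(Γ → X, M)} {G : Finset Γ} {δ ε : ℝ}
    (hG : ∀ x y, EqOn x y G → dist (f x) (f y) < δ) (hε : 0 < ε) {x y : Γ → X}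
    (hxy : EqOn x y (heavyCoords hε f)) : dist (f x) (f y) ≤ G.card * ε + δ := by
  classical
  let H := G \ heavyCoords hε f
  let z : Γ → X := H.piecewise y x
  have light_changes : dist (f x) (f z) ≤ H.card * ε := by
    refine dist_le_card_mul_of_forall_not_variesOn (fun γ hγ hvar => ?_) fun γ hγ => ?_
    · exact (Finset.mem_sdiff.1 hγ).2 (mem_heavyCoords.2 hvar)
    · exact (H.piecewise_eq_of_notMem _ _ hγ).symm
  have z_eqOn : EqOn z y G := by
    intro γ hγ
    by_cases hγH : γ ∈ H
    · exact H.piecewise_eq_of_mem _ _ hγH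
    · have hheavy : γ ∈ heavyCoords hε f := by simp_all [H]
      exact (H.piecewise_eq_of_notMem _ _ hγH).trans (hxy hheavy)
  calc dist (f x) (f y) ≤ dist (f x) (f z) + dist (f z) (f y) := dist_triangle _ _ _
    _ ≤ H.card * ε + δ := add_le_add light_changes (hG z y z_eqOn).le
    _ ≤ G.card * ε + δ := by
      gcongr
      exact Finset.sdiff_subset

theorem eventually_forall_eqOn_heavyCoords_dist_lt (f : C(Γ → X, M)) {δ : ℝ}
    (hδ : 0 < δ) : ∀ᶠ k : ℕ in atTop, ∀ x y,
      EqOn x y (heavyCoords (Nat.one_div_pos_of_nat (α := ℝ) (n := k)) f) →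
        dist (f x) (f y) < δ := by
  obtain ⟨G, hG⟩ := exists_finset_forall_eqOn_dist_lt f.continuous (half_pos hδ)
  have bound_tendsto : Tendsto (fun k : ℕ => (G.card : ℝ) * (1 / ((k : ℝ) + 1))) atTop (𝓝 0) := by
    simpa using tendsto_one_div_add_atTop_nhds_zero_nat.const_mul (G.card : ℝ)
  filter_upwards [bound_tendsto.eventually_lt_const (half_pos hδ)] with k hk x y hxy
  linarith [dist_le_of_eqOn_heavyCoords hG _ hxy]

end VariesOn

section LocallyConstant

variable {K D Z : Type*} [TopologicalSpace K] [TopologicalSpace Z]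

theorem continuous_toContinuousMap_map (π : LocallyConstant K D) :
    Continuous fun v : D → Z => (π.map v : C(K, Z)) := by
  refine ContinuousMap.continuous_of_continuous_uncurry _ (continuous_iff_continuousAt.2 ?_)
  rintro ⟨v, x⟩
  have eventually_eq : ∀ᶠ p in 𝓝 (v, x), p.1 (π p.2) = p.1 (π x) :=
    ((π.isLocallyConstant.eventually_eq x).prod_inr_nhds v).mono fun p hp => congrArg p.1 hp
  exact ((continuous_apply (π x)).comp continuous_fst).continuousAt.congr
    (eventually_eq.mono fun _ hp => hp.symm)

theorem exists_locallyConstant_forall_eqOn {Γ X : Type*} [TopologicalSpace X]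
    [DiscreteTopology X] {D : Set (Γ → X)} (hD : Dense D) (E : Finset Γ) :
    ∃ π : LocallyConstant (Γ → X) D, ∀ x, EqOn (π x : Γ → X) x E := by
  have restrict_continuous : Continuous (E.restrict : (Γ → X) → E → X) := by fun_prop
  have dense_restrict (p : range (E.restrict : (Γ → X) → E → X)) : ∃ d : D, E.restrict d.1 = p := by
    obtain ⟨d, hdp, hdD⟩ := hD.exists_mem_open
      ((isOpen_discrete {p.1}).preimage restrict_continuous) p.2
    exact ⟨⟨d, hdp⟩, hdD⟩
  choose g hg using dense_restrict
  refine ⟨⟨fun x => g ⟨E.restrict x, mem_range_self x⟩, ?_⟩, fun x γ hγ => ?_⟩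
  · exact ((IsLocallyConstant.of_discrete g).comp_continuous
      (restrict_continuous.subtype_mk mem_range_self))
  · exact congrFun (hg ⟨E.restrict x, mem_range_self x⟩) ⟨γ, hγ⟩

end LocallyConstant

section BaCp

theorem measurable_eval_BaCp {K : Type*} [TopologicalSpace K] (t : K) :
    Measurable[BaCp K] fun f : C(K, ℝ) => f t :=
  Measurable.of_comap_le (le_iSup (fun t => MeasurableSpace.comap (fun f : C(K, ℝ) => f t) _) t)

theorem BaCp_le_borel (K : Type*) [TopologicalSpace K] : BaCp K ≤ borel C(K, ℝ) := by
  let : MeasurableSpace C(K, ℝ) := borel _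
  have : BorelSpace C(K, ℝ) := ⟨rfl⟩
  exact iSup_le fun t => (continuous_eval_const t).measurable.comap_le

theorem measurable_resample {K D I : Type*} [TopologicalSpace K] [CompactSpace K] [Countable D]
    (d : D → K) (π : I → LocallyConstant K D) {i : C(K, ℝ) → I}
    (hi : Measurable[BaCp K, ⊤] i) :
    Measurable[BaCp K, borel _] fun f => ((π (i f)).map (f ∘ d) : C(K, ℝ)) := by
  let : MeasurableSpace I := ⊤
  let mC : MeasurableSpace C(K, ℝ) := borel _
  have : BorelSpace C(K, ℝ) := ⟨rfl⟩
  have samples_measurable : Measurable[BaCp K] fun (f : C(K, ℝ)) => f ∘ d :=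
    @measurable_pi_lambda _ _ _ (BaCp K) _ _ fun c => measurable_eval_BaCp (d c)
  have map_measurable : Measurable
      (Function.uncurry fun (v : D → ℝ) (j : I) => ((π j).map v : C(K, ℝ))) :=
    measurable_uncurry_of_continuous_of_measurable
      (fun j => continuous_toContinuousMap_map (π j)) fun _ => measurable_from_top
  exact map_measurable.comp (samples_measurable.prodMk hi)

variable {Γ X : Type*} [TopologicalSpace X]

theorem measurableSet_variesOn [SeparableSpace (Γ → X)] (B : Set Γ) (η : ℝ) :
    MeasurableSet[BaCp (Γ → X)] {f | VariesOn f B η} := by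
  classical
  let := BaCp (Γ → X)
  obtain ⟨D, D_countable, D_dense⟩ := exists_countable_dense ((Γ → X) × (Γ → X))
  have piecewise_continuous :
      Continuous fun p : (Γ → X) × (Γ → X) => B.piecewise p.2 p.1 :=
    continuous_pi fun γ => by
      by_cases hγ : γ ∈ B
      · simp only [piecewise_eq_of_mem _ _ _ hγ]
        fun_prop
      · simp only [piecewise_eq_of_notMem _ _ _ hγ]
        fun_prop
  have variesOn_iff (f : C(Γ → X, ℝ)) :
      VariesOn f B η ↔ ∃ p ∈ D, η < dist (f p.1) (f (B.piecewise p.2 p.1)) := by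
    constructor
    · rintro ⟨x, y, hxy, hlt⟩
      have isOpen_lt_dist :
          IsOpen {p : (Γ → X) × (Γ → X) | η < dist (f p.1) (f (B.piecewise p.2 p.1))} :=
        isOpen_lt continuous_const (by fun_prop)
      have hy : B.piecewise y x = y := by
        funext γ
        by_cases hγ : γ ∈ B
        · exact piecewise_eq_of_mem _ _ _ hγ
        · exact (piecewise_eq_of_notMem _ _ _ hγ).trans (hxy hγ)
      have xy_mem : η < dist (f x) (f (B.piecewise y x)) := by rwa [hy]
      exact D_dense.exists_mem_open isOpen_lt_dist ⟨(x, y), xy_mem⟩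
    · rintro ⟨p, -, hlt⟩
      exact ⟨_, _, fun γ hγ => (piecewise_eq_of_notMem _ _ _ hγ).symm, hlt⟩
  have setOf_eq : {f : C(Γ → X, ℝ) | VariesOn f B η} =
      ⋃ p ∈ D, {f | η < dist (f p.1) (f (B.piecewise p.2 p.1))} := by
    ext f
    simpa using variesOn_iff f
  rw [setOf_eq]
  exact .biUnion D_countable fun p _ => measurableSet_lt measurable_const
    ((measurable_eval_BaCp _).dist (measurable_eval_BaCp _))

theorem IsKunen.measurable_heavyCoords [CompactSpace X] [SeparableSpace X] (hΓ : IsKunen Γ)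
    {ε : ℝ} (hε : 0 < ε) :
    Measurable[BaCp (Γ → X), ⊤] (heavyCoords hε) := by
  let := BaCp (Γ → X)
  obtain ⟨e, he⟩ := hΓ.exists_injective_nat_bool
  have := separableSpace_pi_of_injective_nat_bool (X := X) he
  refine HitMeasurable.measurable_of_isKunen (fun A => ?_) hΓ
  have hits_eq : {f : C(Γ → X, ℝ) | ∃ γ ∈ heavyCoords hε f, γ ∈ A} =
      ⋃ n : ℕ, ⋂ j, ⋃ c : Fin j → Bool,
        {f : C(Γ → X, ℝ) | VariesOn f (A ∩ {γ | initialBits e j γ = c}) (ε + 1 / (n + 1))} := by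
    ext f
    simp only [mem_heavyCoords, and_comm, mem_iUnion, mem_iInter, mem_ofPred_eq]
    exact exists_variesOn_singleton_iff f.continuous he A hε.le
  rw [hits_eq]
  exact .iUnion fun n => .iInter fun j => .iUnion fun c => measurableSet_variesOn _ _

theorem stmt5_general [Finite X] [DiscreteTopology X] (hΓ : IsKunen Γ) :
    BaCp (Γ → X) = borel C(Γ → X, ℝ) := by
  refine le_antisymm (BaCp_le_borel _) ?_
  obtain ⟨e, he⟩ := hΓ.exists_injective_nat_bool
  have := separableSpace_pi_of_injective_nat_bool (X := X) he
  obtain ⟨D, D_countable, D_dense⟩ := exists_countable_dense (Γ → X)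
  have := D_countable.to_subtype
  choose π hπ using exists_locallyConstant_forall_eqOn D_dense
  let T (k : ℕ) (f : C(Γ → X, ℝ)) : C(Γ → X, ℝ) :=
    (π (heavyCoords (Nat.one_div_pos_of_nat (n := k)) f)).map (f ∘ Subtype.val)
  have T_measurable (k : ℕ) : Measurable[BaCp (Γ → X), borel _] (T k) :=
    measurable_resample _ π (hΓ.measurable_heavyCoords _)
  have T_tendsto (f : C(Γ → X, ℝ)) : Tendsto (T · f) atTop (𝓝 f) := by
    refine ContinuousMap.tendsto_iff_tendstoUniformly.2 (Metric.tendstoUniformly_iff.2 ?_)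
    intro δ hδ
    filter_upwards [eventually_forall_eqOn_heavyCoords_dist_lt f hδ] with k hk x
    exact hk _ _ (hπ _ x).symm
  let mC : MeasurableSpace C(Γ → X, ℝ) := borel _
  have : BorelSpace C(Γ → X, ℝ) := ⟨rfl⟩
  have id_measurable : Measurable[BaCp (Γ → X), borel _] (id : C(Γ → X, ℝ) → C(Γ → X, ℝ)) :=
    @measurable_of_tendsto_metrizable _ _ (BaCp (Γ → X)) _ _ _ _ _ _ T_measurable
      (tendsto_pi_nhds.2 T_tendsto)
  exact fun s hs => id_measurable hs

end BaCp

/-- If `|Γ| = ℵ₁` then `Ba(C_p(2^Γ)) = Bo(C(2^Γ))`. -/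
theorem stmt5 (Γ : Type*) (h : Cardinal.mk Γ = Cardinal.aleph 1) :
    BaCp (Γ → Bool) = borel C(Γ → Bool, ℝ) :=
  stmt5_general (isKunen_of_mk_le_aleph_one h.le)
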